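/- arXiv:1711.02802 — 2 statements merged into one kernel-verified Lean document; each statement's English description precedes it below -/
import Mathlib

section
/- Let p be a prime and R̂ a commutative ring in which p is a nonzerodivisor. Let (𝒜_i)_{i∈ℤ} be p-torsion-free R̂-modules and δ_i: 𝒜_i → 𝒜_{i+1} R̂-linear maps such that for each i there is an R̂-linear map γ_i: 𝒜_i → 𝒜_{i+2} with δ_{i+1}∘δ_i = p²·γ_i. Define C_i = 𝒜_i ⊕ 𝒜_{i+1} and d_i: C_i → C_{i+1} by d_i(x, y) = (δ_i x + (−1)^i p·y, (−1)^i p·γ_i x + δ_{i+1} y). Then: (a) d_{i+1}∘d_i = 0, so (C, d) is a cochain complex of R̂-modules; (b) the reductions δ̄_i: 𝒜_i/p𝒜_i → 𝒜_{i+1}/p𝒜_{i+1} satisfy δ̄_{i+1}∘δ̄_i = 0; (c) the degreewise surjections C_i → 𝒜_i/p𝒜_i, (x, y) ↦ x mod p, form a quasi-isomorphism of cochain complexes from (C, d) to (𝒜/p𝒜, δ̄). -/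
/-!
Statement 11: Let `p` be a prime and `R̂` a commutative ring in which `p` is a nonzerodivisor.
Given `p`-torsion-free modules `𝒜ᵢ` and maps `δᵢ : 𝒜ᵢ → 𝒜ᵢ₊₁` with `δᵢ₊₁ ∘ δᵢ = p² γᵢ`,
the maps `dᵢ(x, y) = (δᵢ x + (−1)ⁱ p y, (−1)ⁱ p γᵢ x + δᵢ₊₁ y)` on `Cᵢ = 𝒜ᵢ ⊕ 𝒜ᵢ₊₁`
square to zero, the reductions `δ̄ᵢ` on `𝒜ᵢ/p𝒜ᵢ` square to zero, and the degreewise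
surjections `Cᵢ → 𝒜ᵢ/p𝒜ᵢ, (x, y) ↦ x mod p` form a quasi-isomorphism (a morphism of
complexes inducing isomorphisms on all cohomology).
-/

theorem torsionfree_resolution_quasi_iso
    (p : ℕ) (hp : p.Prime) (R : Type*) [CommRing R]
    (hpnzd : (p : R) ∈ nonZeroDivisors R)
    (A : ℤ → Type*) [∀ i, AddCommGroup (A i)] [∀ i, Module R (A i)]
    (htf : ∀ (i : ℤ) (x : A i), (p : R) • x = 0 → x = 0)
    (δ : ∀ i : ℤ, A i →ₗ[R] A (i + 1))
    (γ : ∀ i : ℤ, A i →ₗ[R] A (i + 1 + 1))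
    (hδδ : ∀ i : ℤ, (δ (i + 1)).comp (δ i) = ((p : R) ^ 2) • γ i) :
    -- the submodule `p ⬝ 𝒜ᵢ`:
    let pA : ∀ i : ℤ, Submodule R (A i) := fun i =>
      LinearMap.range ((p : R) • (LinearMap.id : A i →ₗ[R] A i))
    -- the differential `dᵢ : 𝒜ᵢ ⊕ 𝒜ᵢ₊₁ → 𝒜ᵢ₊₁ ⊕ 𝒜ᵢ₊₂`:
    let d : ∀ i : ℤ, (A i × A (i + 1)) →ₗ[R] (A (i + 1) × A (i + 1 + 1)) := fun i =>
      LinearMap.prod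
        ((δ i).comp (LinearMap.fst R (A i) (A (i + 1))) +
          (((i.negOnePow : ℤˣ) : ℤ) • ((p : R) • LinearMap.snd R (A i) (A (i + 1)))))
        ((((i.negOnePow : ℤˣ) : ℤ) • ((p : R) • ((γ i).comp (LinearMap.fst R (A i) (A (i + 1)))))) +
          (δ (i + 1)).comp (LinearMap.snd R (A i) (A (i + 1))))
    -- the reduction `δ̄ᵢ : 𝒜ᵢ/p𝒜ᵢ → 𝒜ᵢ₊₁/p𝒜ᵢ₊₁` of `δᵢ` modulo `p`:
    let δbar : ∀ i : ℤ, (A i ⧸ pA i) →ₗ[R] (A (i + 1) ⧸ pA (i + 1)) := fun i =>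
      Submodule.mapQ (pA i) (pA (i + 1)) (δ i)
        (by rintro x ⟨y, rfl⟩; exact ⟨δ i y, by simp⟩)
    -- the degreewise surjection `Cᵢ → 𝒜ᵢ/p𝒜ᵢ`, `(x, y) ↦ x mod p`:
    let π : ∀ i : ℤ, (A i × A (i + 1)) →ₗ[R] (A i ⧸ pA i) := fun i =>
      (pA i).mkQ.comp (LinearMap.fst R (A i) (A (i + 1)))
    -- (a) `(C, d)` is a cochain complex:
    (∀ i : ℤ, (d (i + 1)).comp (d i) = 0) ∧
    -- (b) `(𝒜/p𝒜, δ̄)` is a cochain complex: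
    (∀ i : ℤ, (δbar (i + 1)).comp (δbar i) = 0) ∧
    -- (c) the `π i` form a morphism of complexes ...
    (∀ i : ℤ, (π (i + 1)).comp (d i) = (δbar i).comp (π i)) ∧
    -- ... which is injective on cohomology ...
    (∀ (i : ℤ) (c : A (i + 1) × A (i + 1 + 1)), d (i + 1) c = 0 →
      π (i + 1) c ∈ LinearMap.range (δbar i) → c ∈ LinearMap.range (d i)) ∧
    -- ... and surjective on cohomology.
    (∀ (i : ℤ) (a : A (i + 1) ⧸ pA (i + 1)), δbar (i + 1) a = 0 →
      ∃ c : A (i + 1) × A (i + 1 + 1), d (i + 1) c = 0 ∧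
        π (i + 1) c - a ∈ LinearMap.range (δbar i)) := by
  intro pA d δbar π
  have hdd : ∀ (i : ℤ) (x : A i), δ (i + 1) (δ i x) = (p : R) • (p : R) • γ i x := by
    intro i x
    have h := LinearMap.congr_fun (hδδ i) x
    simp only [LinearMap.comp_apply, LinearMap.smul_apply] at h
    rw [h, smul_smul, pow_two]
  have hinj : ∀ (i : ℤ) (x y : A i), (p : R) • x = (p : R) • y → x = y := by
    intro i x y h
    exact sub_eq_zero.mp (htf i _ (by rw [smul_sub, h, sub_self]))
  have hγδ : ∀ (i : ℤ) (x : A i), γ (i + 1) (δ i x) = δ (i + 1 + 1) (γ i x) := by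
    intro i x
    apply hinj
    apply hinj
    rw [← hdd, hdd i x, map_smul, map_smul]
  have hd : ∀ (i : ℤ) (x : A i) (y : A (i + 1)), d i (x, y) =
      (δ i x + ((i.negOnePow : ℤˣ) : ℤ) • (p : R) • y,
        ((i.negOnePow : ℤˣ) : ℤ) • (p : R) • γ i x + δ (i + 1) y) := fun i x y => rfl
  have hs : ∀ i : ℤ, (i.negOnePow : ℤˣ) = 1 ∧ (i + 1).negOnePow = -1 ∨
      (i.negOnePow : ℤˣ) = -1 ∧ (i + 1).negOnePow = 1 := by
    intro i
    rcases Int.units_eq_one_or i.negOnePow with h | h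
    · left; exact ⟨h, by rw [Int.negOnePow_succ, h]⟩
    · right; exact ⟨h, by rw [Int.negOnePow_succ, h, neg_neg]⟩
  have hmem : ∀ (i : ℤ) (x : A i), x ∈ pA i ↔ ∃ z, (p : R) • z = x := fun i x => Iff.rfl
  refine ⟨?_, ?_, ?_, ?_, ?_⟩
  · intro i
    apply LinearMap.ext
    rintro ⟨x, y⟩
    rw [LinearMap.comp_apply, hd, hd]
    rcases hs i with ⟨h, h'⟩ | ⟨h, h'⟩ <;> rw [h, h'] <;>
      simp [hdd, hγδ] <;> constructor <;> abel
  · intro i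
    apply LinearMap.ext
    intro a
    obtain ⟨x, rfl⟩ := (pA i).mkQ_surjective a
    change (pA (i + 1 + 1)).mkQ (δ (i + 1) (δ i x)) = 0
    rw [Submodule.mkQ_apply, Submodule.Quotient.mk_eq_zero, hmem]
    exact ⟨_, (hdd i x).symm⟩
  · intro i
    apply LinearMap.ext
    rintro ⟨x, y⟩
    change (pA (i + 1)).mkQ (δ i x + ((i.negOnePow : ℤˣ) : ℤ) • (p : R) • y)
      = (pA (i + 1)).mkQ (δ i x)
    rw [← sub_eq_zero, ← map_sub, add_sub_cancel_left, Submodule.mkQ_apply,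
      Submodule.Quotient.mk_eq_zero, hmem]
    exact ⟨((i.negOnePow : ℤˣ) : ℤ) • y, smul_comm _ _ _⟩
  · rintro i ⟨x, y⟩ hc ⟨a, ha⟩
    obtain ⟨u, rfl⟩ := (pA i).mkQ_surjective a
    change (pA (i + 1)).mkQ (δ i u) = (pA (i + 1)).mkQ x at ha
    rw [eq_comm, ← sub_eq_zero, ← map_sub, Submodule.mkQ_apply,
      Submodule.Quotient.mk_eq_zero, hmem] at ha
    obtain ⟨v, hv⟩ := ha
    obtain rfl : x = δ i u + (p : R) • v := by rw [hv]; abel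
    rw [hd] at hc
    have h1 := (Prod.ext_iff.mp hc).1
    refine ⟨(u, ((i.negOnePow : ℤˣ) : ℤ) • v), ?_⟩
    rw [hd]
    rcases hs i with ⟨h, h'⟩ | ⟨h, h'⟩ <;> rw [h'] at h1 <;> rw [h] <;>
      simp only [Units.val_neg, Units.val_one, neg_smul, one_smul, map_add, map_smul, hdd,
        Prod.fst_zero] at h1 <;>
      refine Prod.ext ?_ ?_
    · simp
    · apply hinj
      simp only [Units.val_one, one_smul, smul_add]
      exact add_neg_eq_zero.mp h1
    · simp
    · apply hinj
      simp only [Units.val_neg, Units.val_one, neg_smul, one_smul, smul_add, map_neg, smul_neg]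
      rw [← neg_add]
      exact neg_eq_of_add_eq_zero_right h1
  · intro i a ha
    obtain ⟨x, rfl⟩ := (pA (i + 1)).mkQ_surjective a
    change (pA (i + 1 + 1)).mkQ (δ (i + 1) x) = 0 at ha
    rw [Submodule.mkQ_apply, Submodule.Quotient.mk_eq_zero, hmem] at ha
    obtain ⟨z, hz⟩ := ha
    have hz2 : δ (i + 1 + 1) z = (p : R) • γ (i + 1) x := by
      apply hinj
      rw [← map_smul, hz, hdd]
    refine ⟨(x, ((i.negOnePow : ℤˣ) : ℤ) • z), ?_, ?_⟩
    · rw [hd]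
      rcases hs i with ⟨h, h'⟩ | ⟨h, h'⟩ <;> rw [h, h'] <;> simp [hz2, ← hz]
    · have : π (i + 1) (x, ((i.negOnePow : ℤˣ) : ℤ) • z) - (pA (i + 1)).mkQ x = 0 :=
        sub_self _
      rw [this]
      exact Submodule.zero_mem _
end

section
/- Let R be a commutative ring, p a prime, and 0 → K →^β E →^α Q → 0 a short exact sequence of R-modules with K and Q flat over R. For 0 ≤ j ≤ p let G^j ⊆ E^{⊗p} be the sum, over subsets S ⊆ {1, …, p} with |S| = j, of the images of the maps M_1 ⊗ ⋯ ⊗ M_p → E^{⊗p}, where M_i = K (mapped via β) for i ∈ S and M_i = E otherwise; the cyclic permutation action of C_p on E^{⊗p} preserves each G^j. Then: (a) α^{⊗p}: E^{⊗p} → Q^{⊗p} is surjective with kernel G^1, so it induces a C_p-equivariant isomorphism G^0/G^1 ≅ Q^{⊗p}, where C_p acts on Q^{⊗p} by cyclic permutation; (b) there is a C_p-equivariant isomorphism ℤ[C_p] ⊗_ℤ (K ⊗_R Q^{⊗(p−1)}) ≅ G^1/G^2, where C_p acts on the left-hand side by left translation on the group ring ℤ[C_p] and trivially on K ⊗_R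 Q^{⊗(p−1)}; explicitly, the identity group element tensor k ⊗ q₁ ⊗ ⋯ ⊗ q_{p−1} is sent to the class of β(k) ⊗ q̃₁ ⊗ ⋯ ⊗ q̃_{p−1} in G^1/G^2, for arbitrary lifts q̃_i ∈ E of the q_i ∈ Q (this is well defined modulo G^2). -/
open scoped TensorProduct

set_option linter.unusedSectionVars false

namespace FiltTP

section general
variable {R : Type} [CommRing R] {K E Q X T: Type} [AddCommGroup K] [Module R K] [AddCommGroup E]
  [Module R E] [AddCommGroup Q] [Module R Q] [AddCommGroup X] [Module R X]
  [AddCommGroup T] [Module R T]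
variable {ι : Type} [Finite ι] [DecidableEq ι]

/-- A multilinear map vanishing when one entry is in `ker α` only depends on the images. -/
lemma eq_of_eq (α : E →ₗ[R] Q) (g : MultilinearMap R (fun _ : ι => E) X)
    (h : ∀ v i, α (v i) = 0 → g v = 0) (v w : ι → E) (hvw : ∀ i, α (v i) = α (w i)) :
    g v = g w := by
  have := Fintype.ofFinite ι
  have key : ∀ s : Finset ι, g (s.piecewise v w) = g w := by
    intro s
    induction s using Finset.induction_on with
    | empty => simp
    | insert a s ha ih =>
      rw [Finset.piecewise_insert, ← ih]
      have h1 : s.piecewise v w = Function.update (s.piecewise v w) a (w a) := by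
        rw [eq_comm, Function.update_eq_self_iff]
        simp [ha]
      rw [← sub_eq_zero]
      conv_lhs => rw [h1]
      rw [Function.update_idem, ← g.map_update_sub]
      apply h _ a
      simp [hvw a]
  simpa using key Finset.univ

lemma desc (α : E →ₗ[R] Q) (hα : Function.Surjective α) (g : MultilinearMap R (fun _ : ι => E) X)
    (h : ∀ v i, α (v i) = 0 → g v = 0) :
    ∃ g' : (⨂[R] _ : ι, Q) →ₗ[R] X, ∀ v : ι → E, g' (⨂ₜ[R] i, α (v i)) = g v := by
  classical
  choose s hs using hα
  have hupd : ∀ (m : ι → Q) (i : ι) (x : Q) (y : E), α y = x →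
      g (fun j => s (Function.update m i x j)) = g (Function.update (fun j => s (m j)) i y) := by
    intro m i x y hxy
    apply eq_of_eq α g h
    intro j
    rw [hs]
    by_cases hj : j = i
    · subst hj; simp [hxy]
    · simp [hj, hs]
  let G : MultilinearMap R (fun _ : ι => Q) X :=
    MultilinearMap.mk' (fun m => g (fun j => s (m j)))
      (by
        intro m i x y
        rw [hupd m i (x + y) (s x + s y) (by simp [hs]), g.map_update_add, hupd m i x (s x) (hs x),
          hupd m i y (s y) (hs y)])
      (by
        intro m i c x
        rw [hupd m i (c • x) (c • s x) (by simp [hs]), g.map_update_smul, hupd m i x (s x) (hs x)])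
  refine ⟨PiTensorProduct.lift G, fun v => ?_⟩
  rw [PiTensorProduct.lift.tprod]
  change g _ = g v
  apply eq_of_eq α g h
  intro j
  simp [hs]

lemma flat_pi (hQ : Module.Flat R Q) (ι : Type) [Finite ι] : Module.Flat R (⨂[R] _ : ι, Q) := by
  induction ι using Finite.induction_empty_option with
  | @of_equiv α β e ih =>
    exact Module.Flat.of_linearEquiv (PiTensorProduct.reindex R (fun _ => Q) e).symm
  | h_empty => exact Module.Flat.of_linearEquiv (PiTensorProduct.isEmptyEquiv (R := R) (s := fun _ => Q) PEmpty)
  | @h_option α _ ih =>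
    have e1 := PiTensorProduct.reindex R (fun _ => Q) (Equiv.optionEquivSumPUnit.{0} α)
    have e2 := (PiTensorProduct.tmulEquiv (ι := α) (ι₂ := PUnit.{1}) R Q).symm
    have e3 : (⨂[R] _ : PUnit.{1}, Q) ≃ₗ[R] Q := PiTensorProduct.subsingletonEquiv PUnit.unit
    have : Module.Flat R (⨂[R] _ : PUnit.{1}, Q) := Module.Flat.of_linearEquiv e3
    exact Module.Flat.of_linearEquiv (e1.trans e2)

/-- insertion of an entry at `i0` -/
def ins (i0 : ι) (x : E) (v : {i : ι // i ≠ i0} → E) : ι → E :=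
  fun i => if h : i = i0 then x else v ⟨i, h⟩

lemma ins_update (i0 : ι) (x : E) (v : {i : ι // i ≠ i0} → E) (j) (y : E) :
    ins i0 x (Function.update v j y) = Function.update (ins i0 x v) j.1 y := by
  ext i
  by_cases hi : i = i0
  · subst hi
    have : i ≠ j.1 := fun h => j.2 h.symm
    simp [ins, Function.update_of_ne this]
  · by_cases hj : i = j.1
    · subst hj; simp [ins, hi]
    · have : (⟨i, hi⟩ : {i : ι // i ≠ i0}) ≠ j := fun h => hj (by rw [← h])
      simp [ins, hi, Function.update_of_ne hj, Function.update_of_ne this]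

lemma ins_eq (i0 : ι) (x : E) (v : {i : ι // i ≠ i0} → E) :
    ins i0 x v = Function.update (ins i0 0 v) i0 x := by
  ext i
  by_cases hi : i = i0
  · subst hi; simp [ins]
  · simp [ins, hi]

/-- insertion as a multilinear map -/
noncomputable def insMap (i0 : ι) (β : K →ₗ[R] E) (g : MultilinearMap R (fun _ : ι => E) X) :
    MultilinearMap R (fun _ : {i : ι // i ≠ i0} => E) (K →ₗ[R] X) :=
  MultilinearMap.mk' (fun v =>
    { toFun := fun k => g (ins i0 (β k) v)
      map_add' := by
        intro a b
        rw [ins_eq, map_add, g.map_update_add, ← ins_eq, ← ins_eq]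
      map_smul' := by
        intro a b
        rw [ins_eq, map_smul, g.map_update_smul, ← ins_eq]; rfl })
    (by
      intro m i x y
      ext k
      simp [ins_update])
    (by
      intro m i c x
      ext k
      simp [ins_update])

lemma exists_f (i0 : ι) (β : K →ₗ[R] E) (α : E →ₗ[R] Q) (hα : Function.Surjective α)
    (g : MultilinearMap R (fun _ : ι => E) X)
    (h : ∀ k v i, α (v i) = 0 → g (ins i0 (β k) v) = 0) :
    ∃ f : (K ⊗[R] (⨂[R] (_ : {i : ι // i ≠ i0}), Q)) →ₗ[R] X,
      ∀ k v, f (k ⊗ₜ[R] (⨂ₜ[R] i, α (v i))) = g (ins i0 (β k) v) := by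
  obtain ⟨g', hg'⟩ := desc α hα (insMap i0 β g) (fun v i hv => by
    ext k
    exact h k v i hv)
  refine ⟨TensorProduct.lift g'.flip, fun k v => ?_⟩
  rw [TensorProduct.lift.tmul, LinearMap.flip_apply, hg']
  rfl

/-- the projection -/
noncomputable def proj (i0 : ι) (α : E →ₗ[R] Q) :
    (⨂[R] _ : ι, E) →ₗ[R] E ⊗[R] (⨂[R] (_ : {i : ι // i ≠ i0}), Q) :=
  PiTensorProduct.lift (MultilinearMap.mk' (fun v => v i0 ⊗ₜ[R] (⨂ₜ[R] i : {i : ι // i ≠ i0}, α (v i.1)))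
    (by
      intro m i x y
      by_cases hi : i = i0
      · subst hi
        have (z : E) : (fun j : {j : ι // j ≠ i} => α (Function.update m i z j.1)) =
            fun j : {j : ι // j ≠ i} => α (m j.1) := by
          ext j; rw [Function.update_of_ne j.2]
        simp only [this, Function.update_self, TensorProduct.add_tmul]
      · have (z : E) : (fun j : {j : ι // j ≠ i0} => α (Function.update m i z j.1)) =
            Function.update (fun j : {j : ι // j ≠ i0} => α (m j.1)) ⟨i, hi⟩ (α z) := by
          ext j
          by_cases hj : j = ⟨i, hi⟩
          · subst hj; simp
          · have : j.1 ≠ i := fun h => hj (Subtype.ext h)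
            rw [Function.update_of_ne this, Function.update_of_ne hj]
        simp only [this, Function.update_of_ne (Ne.symm hi), map_add, MultilinearMap.map_update_add,
          TensorProduct.tmul_add])
    (by
      intro m i c x
      by_cases hi : i = i0
      · subst hi
        have (z : E) : (fun j : {j : ι // j ≠ i} => α (Function.update m i z j.1)) =
            fun j : {j : ι // j ≠ i} => α (m j.1) := by
          ext j; rw [Function.update_of_ne j.2]
        simp only [this, Function.update_self, TensorProduct.smul_tmul']
      · have (z : E) : (fun j : {j : ι // j ≠ i0} => α (Function.update m i z j.1)) =
            Function.update (fun j : {j : ι // j ≠ i0} => α (m j.1)) ⟨i, hi⟩ (α z) := by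
          ext j
          by_cases hj : j = ⟨i, hi⟩
          · subst hj; simp
          · have : j.1 ≠ i := fun h => hj (Subtype.ext h)
            rw [Function.update_of_ne this, Function.update_of_ne hj]
        simp only [this, Function.update_of_ne (Ne.symm hi), map_smul,
          MultilinearMap.map_update_smul, TensorProduct.tmul_smul]))

lemma proj_tprod (i0 : ι) (α : E →ₗ[R] Q) (v : ι → E) :
    proj i0 α (⨂ₜ[R] i, v i) = v i0 ⊗ₜ[R] (⨂ₜ[R] i : {i : ι // i ≠ i0}, α (v i.1)) := by
  rw [proj, PiTensorProduct.lift.tprod]; rfl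

lemma proj_eq_zero (i0 : ι) (α : E →ₗ[R] Q) (v : ι → E) (j : ι) (hj : j ≠ i0) (h : α (v j) = 0) :
    proj i0 α (⨂ₜ[R] i, v i) = 0 := by
  rw [proj_tprod, (PiTensorProduct.tprod R).map_coord_zero ⟨j, hj⟩ h, TensorProduct.tmul_zero]

/-- extension of a map to the induced module -/
lemma induced (p : ℕ) [NeZero p] (σ : Module.End R X) (hσ : σ ^ p = 1) (f : T →ₗ[R] X) :
    ∃ Φ : (T ⊗[ℤ] MonoidAlgebra ℤ (Multiplicative (ZMod p))) →ₗ[R] X,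
      (∀ t, Φ (t ⊗ₜ[ℤ] MonoidAlgebra.of ℤ (Multiplicative (ZMod p)) 1) = f t) ∧
      (∀ z, Φ (TensorProduct.map LinearMap.id (LinearMap.mulLeft ℤ
        (MonoidAlgebra.of ℤ (Multiplicative (ZMod p)) (Multiplicative.ofAdd (1 : ZMod p)))) z) =
          σ (Φ z)) ∧
      (∀ (Y : Type) [AddCommGroup Y] [Module R Y] (π : X →ₗ[R] Y),
        (∀ n, ¬ p ∣ n → ∀ t, π ((σ ^ n) (f t)) = 0) → Function.Injective (π ∘ₗ f) →
          Function.Injective Φ) ∧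
      (∀ S : Submodule R X, (∀ t n, (σ ^ n) (f t) ∈ S) → LinearMap.range Φ ≤ S) := by
  classical
  let A : (T ⊗[ℤ] MonoidAlgebra ℤ (Multiplicative (ZMod p))) ≃ₗ[R] (Multiplicative (ZMod p) →₀ T) :=
    (TensorProduct.AlgebraTensorModule.congr (LinearEquiv.refl R T)
      (MonoidAlgebra.coeffLinearEquiv ℤ)).trans
      (TensorProduct.finsuppScalarRight ℤ R T (Multiplicative (ZMod p)))
  have hA : ∀ t g, A (t ⊗ₜ[ℤ] MonoidAlgebra.of ℤ (Multiplicative (ZMod p)) g) =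
      Finsupp.single g t := by
    intro t g
    ext h
    simp [A, Finsupp.single_apply]
  let B : (Multiplicative (ZMod p) →₀ T) →ₗ[R] X :=
    Finsupp.lsum R (fun g => (σ ^ (Multiplicative.toAdd g).val) ∘ₗ f)
  have hmod : ∀ m n : ℕ, (m : ZMod p) = n → σ ^ m = σ ^ n := by
    intro m n h
    rw [ZMod.natCast_eq_natCast_iff'] at h
    rw [pow_eq_pow_mod m hσ, pow_eq_pow_mod n hσ, h]
  have hΦ : ∀ t g, (B ∘ₗ A.toLinearMap) (t ⊗ₜ[ℤ] MonoidAlgebra.of ℤ (Multiplicative (ZMod p)) g) =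
      (σ ^ (Multiplicative.toAdd g).val) (f t) := by
    intro t g
    rw [LinearMap.comp_apply, LinearEquiv.coe_coe, hA]
    simp [B]
  refine ⟨B ∘ₗ A.toLinearMap, ?_, ?_, ?_, ?_⟩
  · intro t
    rw [hΦ]; simp
  · intro z
    obtain ⟨w, rfl⟩ := A.symm.surjective z
    induction w using Finsupp.induction_linear with
    | zero => simp
    | add x y hx hy => simp only [map_add, hx, hy]
    | single g t =>
      rw [← hA, LinearEquiv.symm_apply_apply, TensorProduct.map_tmul, hΦ, LinearMap.mulLeft_apply,
        ← map_mul, LinearMap.id_apply, hΦ, ← Module.End.mul_apply, ← pow_succ']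
      rw [hmod]
      simp [add_comm]
  · intro Y _ _ π hπ hinj
    rw [LinearMap.coe_comp]
    refine Function.Injective.comp ?_ A.injective
    rw [injective_iff_map_eq_zero]
    intro w hw
    ext g
    apply hinj
    have h1 : π ((σ ^ (p - (Multiplicative.toAdd g).val)) (B w)) = π (f (w g)) := by
      simp only [B, Finsupp.lsum_apply, Finsupp.sum, map_sum]
      rw [Finset.sum_eq_single g]
      · rw [LinearMap.comp_apply, ← Module.End.mul_apply, ← pow_add,
          Nat.sub_add_cancel (ZMod.val_lt _).le, hσ]; rfl
      · intro h _ hne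
        rw [LinearMap.comp_apply, ← Module.End.mul_apply, ← pow_add]
        apply hπ
        intro hd
        apply hne
        rw [← ZMod.natCast_eq_zero_iff] at hd
        rw [Nat.cast_add, Nat.cast_sub (ZMod.val_lt _).le] at hd
        simp at hd
        rw [neg_add_eq_zero] at hd
        exact (Multiplicative.toAdd.injective hd).symm
      · intro hg
        rw [Finsupp.notMem_support_iff] at hg
        simp [hg]
    rw [LinearMap.comp_apply, ← h1, hw]; simp
  · rintro S hS _ ⟨z, rfl⟩
    obtain ⟨w, rfl⟩ := A.symm.surjective z
    induction w using Finsupp.induction_linear with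
    | zero => simp
    | add x y hx hy => simp only [map_add]; exact S.add_mem hx hy
    | single g t =>
      rw [← hA, LinearEquiv.symm_apply_apply, hΦ]
      exact hS _ _

lemma T_ind {i0 : ι} (α : E →ₗ[R] Q) (hα : Function.Surjective α)
    (S : Submodule R (K ⊗[R] (⨂[R] (_ : {i : ι // i ≠ i0}), Q)))
    (h : ∀ (k : K) (v : {i : ι // i ≠ i0} → E), k ⊗ₜ[R] (⨂ₜ[R] i, α (v i)) ∈ S) (t) : t ∈ S := by
  induction t using TensorProduct.induction_on with
  | zero => exact S.zero_mem
  | add x y hx hy => exact S.add_mem hx hy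
  | tmul k y =>
    induction y using PiTensorProduct.induction_on with
    | smul_tprod r q =>
      choose s hs using hα
      have := h k (fun i => s (q i))
      simp only [hs] at this
      rw [TensorProduct.tmul_smul]
      exact S.smul_mem _ this
    | add x y hx hy => rw [TensorProduct.tmul_add]; exact S.add_mem hx hy

lemma rot_pow (τ : Equiv.Perm ι) (n : ℕ) (v : ι → E) :
    (((PiTensorProduct.reindex R (fun _ : ι => E) τ).toLinearMap : Module.End R _) ^ n)
      (⨂ₜ[R] i, v i) = ⨂ₜ[R] i, v ((τ ^ n).symm i) := by
  induction n with
  | zero => rfl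
  | succ n ih =>
    rw [pow_succ', Module.End.mul_apply, ih]
    refine (PiTensorProduct.reindex_tprod (R := R) (s := fun _ : ι => E) τ _).trans ?_
    rfl

lemma finRotate_pow (p : ℕ) [NeZero p] (n : ℕ) (i : Fin p) :
    (finRotate p ^ n) i = i + Fin.ofNat p n := by
  induction n with
  | zero => simp
  | succ n ih =>
    rw [pow_succ', Equiv.Perm.mul_apply, ih, finRotate_apply]
    ext
    simp [Fin.val_add, add_assoc]

end general
end FiltTP

theorem filtration_of_tensor_power_of_extension
    (R : Type) [CommRing R] (p : ℕ) (hp : p.Prime)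
    (K E Q : Type) [AddCommGroup K] [Module R K] [AddCommGroup E] [Module R E]
    [AddCommGroup Q] [Module R Q]
    (hKflat : Module.Flat R K) (hQflat : Module.Flat R Q)
    (β : K →ₗ[R] E) (α : E →ₗ[R] Q)
    (hβ : Function.Injective β) (hα : Function.Surjective α)
    (hexact : LinearMap.range β = LinearMap.ker α) :
    -- the filtration `Gʲ`:
    let G : ℕ → Submodule R (⨂[R] (_ : Fin p), E) := fun j =>
      Submodule.span R
        {x | ∃ (v : Fin p → E) (s : Finset (Fin p)), s.card = j ∧
          (∀ i ∈ s, v i ∈ LinearMap.range β) ∧ x = ⨂ₜ[R] i, v i}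
    -- the generators of the cyclic actions on `E^{⊗p}` and `Q^{⊗p}`:
    let σE : (⨂[R] (_ : Fin p), E) →ₗ[R] ⨂[R] (_ : Fin p), E :=
      (PiTensorProduct.reindex R (fun _ : Fin p => E) (finRotate p)).toLinearMap
    let σQ : (⨂[R] (_ : Fin p), Q) →ₗ[R] ⨂[R] (_ : Fin p), Q :=
      (PiTensorProduct.reindex R (fun _ : Fin p => Q) (finRotate p)).toLinearMap
    -- `α^{⊗p}`:
    let αp : (⨂[R] (_ : Fin p), E) →ₗ[R] ⨂[R] (_ : Fin p), Q :=
      PiTensorProduct.map fun _ => α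
    -- `G¹/G²`:
    let G21 : Submodule R (G 1) := Submodule.comap (G 1).subtype (G 2)
    -- the group ring `ℤ[C_p]` and `ℤ[C_p] ⊗_ℤ (K ⊗_R Q^{⊗(p−1)})`:
    let Cp := Multiplicative (ZMod p)
    let L := (K ⊗[R] (⨂[R] (_ : {i : Fin p // i ≠ ⟨0, hp.pos⟩}), Q)) ⊗[ℤ] MonoidAlgebra ℤ Cp
    -- the generator of `C_p` acting on `L` by left translation on `ℤ[C_p]`
    -- (and trivially on `K ⊗ Q^{⊗(p−1)}`):
    let σL : L →ₗ[ℤ] L :=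
      TensorProduct.map LinearMap.id
        (LinearMap.mulLeft ℤ (MonoidAlgebra.of ℤ Cp (Multiplicative.ofAdd (1 : ZMod p))))
    -- the cyclic action preserves each `Gʲ`:
    (∀ (j : ℕ), ∀ x ∈ G j, σE x ∈ G j) ∧
    -- (a):
    (Function.Surjective αp ∧ LinearMap.ker αp = G 1 ∧ G 0 = ⊤ ∧
      σQ.comp αp = αp.comp σE) ∧
    -- (b):
    (∃ e : L ≃ₗ[R] (G 1 ⧸ G21),
      -- explicit description on generators, with arbitrary lifts `v i` of the `q i`:
      (∀ (kk : K) (v : {i : Fin p // i ≠ ⟨0, hp.pos⟩} → E)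
          (h1 : (⨂ₜ[R] i : Fin p,
            (if h : i = ⟨0, hp.pos⟩ then β kk else v ⟨i, h⟩)) ∈ G 1),
        e ((kk ⊗ₜ[R] (⨂ₜ[R] i, α (v i))) ⊗ₜ[ℤ] (MonoidAlgebra.of ℤ Cp 1)) =
          Submodule.Quotient.mk
            (⟨⨂ₜ[R] i : Fin p, (if h : i = ⟨0, hp.pos⟩ then β kk else v ⟨i, h⟩), h1⟩ :
              G 1)) ∧
      -- `C_p`-equivariance of `e`:
      (∀ (z : L) (y : ⨂[R] (_ : Fin p), E) (hy : y ∈ G 1) (hy' : σE y ∈ G 1),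
        e z = Submodule.Quotient.mk (⟨y, hy⟩ : G 1) →
          e (σL z) = Submodule.Quotient.mk (⟨σE y, hy'⟩ : G 1))) := by
  classical
  intro G σE σQ αp G21 Cp L σL
  have : NeZero p := ⟨hp.pos.ne'⟩
  have hαβ : ∀ x, x ∈ LinearMap.range β ↔ α x = 0 := fun x => by rw [hexact, LinearMap.mem_ker]
  have hαβ' : ∀ k, α (β k) = 0 := fun k => (hαβ _).1 ⟨k, rfl⟩
  have hσpow : ∀ (n : ℕ) (v : Fin p → E), ((σE : Module.End R _) ^ n) (⨂ₜ[R] i, v i) =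
      ⨂ₜ[R] i, v ((finRotate p ^ n).symm i) := fun n v => FiltTP.rot_pow (finRotate p) n v
  have hσ1 : ∀ (v : Fin p → E), σE (⨂ₜ[R] i, v i) =
      ⨂ₜ[R] i, v ((finRotate p).symm i) := fun v => by simpa using hσpow 1 v
  have hσp : (σE : Module.End R _) ^ p = 1 := by
    apply PiTensorProduct.ext
    ext v
    change ((σE : Module.End R _) ^ p) (⨂ₜ[R] i, v i) = ⨂ₜ[R] i, v i
    rw [hσpow]
    congr 1
    ext i
    congr 1
    rw [Equiv.symm_apply_eq, FiltTP.finRotate_pow]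
    ext; simp
  have hGmem : ∀ (j : ℕ) (v : Fin p → E) (s : Finset (Fin p)), s.card = j →
      (∀ i ∈ s, v i ∈ LinearMap.range β) → (⨂ₜ[R] i, v i) ∈ G j :=
    fun j v s h1 h2 => Submodule.subset_span ⟨v, s, h1, h2, rfl⟩
  have hσG : ∀ (j : ℕ), ∀ x ∈ G j, σE x ∈ G j := by
    intro j
    change G j ≤ (G j).comap σE
    refine Submodule.span_le.2 ?_
    rintro _ ⟨v, s, hs, hv, rfl⟩
    change σE _ ∈ G j
    rw [hσ1]
    refine hGmem j _ (s.map (finRotate p).toEmbedding) (by simpa using hs) ?_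
    intro i hi
    rw [Finset.mem_map_equiv] at hi
    exact hv _ hi
  refine ⟨hσG, ⟨?_, ?_, ?_, ?_⟩, ?_⟩
  · intro y
    change y ∈ LinearMap.range αp
    induction y using PiTensorProduct.induction_on with
    | smul_tprod r q =>
      choose s hs using hα
      refine Submodule.smul_mem _ _ ⟨⨂ₜ[R] i, s (q i), ?_⟩
      simp [αp, hs]
    | add x y hx hy => exact Submodule.add_mem _ hx hy
  · apply le_antisymm
    · obtain ⟨g, hg⟩ := FiltTP.desc α hα ((G 1).mkQ.compMultilinearMap (PiTensorProduct.tprod R))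
        (by
          intro v i hv
          change (G 1).mkQ (⨂ₜ[R] i, v i) = 0
          rw [Submodule.mkQ_apply, Submodule.Quotient.mk_eq_zero]
          exact hGmem 1 v {i} (by simp) (by simpa using (hαβ _).2 hv))
      have hcomp : g ∘ₗ αp = (G 1).mkQ := by
        apply PiTensorProduct.ext
        ext v
        simpa [αp] using hg v
      intro x hx
      rw [LinearMap.mem_ker] at hx
      rw [← Submodule.Quotient.mk_eq_zero, ← Submodule.mkQ_apply, ← hcomp, LinearMap.comp_apply, hx,
        map_zero]
    · refine Submodule.span_le.2 ?_
      rintro _ ⟨v, s, hs, hv, rfl⟩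
      obtain ⟨a, rfl⟩ := Finset.card_eq_one.1 hs
      change αp _ = 0
      simp only [αp, PiTensorProduct.map_tprod]
      exact (PiTensorProduct.tprod R).map_coord_zero a ((hαβ _).1 (hv a (by simp)))
  · rw [eq_top_iff, ← PiTensorProduct.span_tprod_eq_top]
    refine Submodule.span_le.2 ?_
    rintro _ ⟨v, rfl⟩
    exact hGmem 0 v ∅ (by simp) (by simp)
  · exact (PiTensorProduct.map_comp_reindex_eq (fun _ : Fin p => α) (finRotate p)).symm
  -- part (b)
  let i0 : Fin p := ⟨0, hp.pos⟩
  have hrot : ∀ n : ℕ, ((finRotate p ^ n) i0).val = n % p := by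
    intro n
    rw [FiltTP.finRotate_pow]
    simp [i0, Fin.val_add]
  obtain ⟨f, hf⟩ := FiltTP.exists_f i0 β α hα
    ((G 2).mkQ.compMultilinearMap (PiTensorProduct.tprod R))
    (by
      intro k v i hv
      change (G 2).mkQ (⨂ₜ[R] j, FiltTP.ins i0 (β k) v j) = 0
      rw [Submodule.mkQ_apply, Submodule.Quotient.mk_eq_zero]
      refine hGmem 2 _ {i0, i.1} (Finset.card_pair i.2.symm) ?_
      intro j hj
      simp only [Finset.mem_insert, Finset.mem_singleton] at hj
      rcases hj with rfl | rfl
      · simp [FiltTP.ins]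
      · rw [hαβ]
        simpa [FiltTP.ins, i.2] using hv)
  replace hf : ∀ k v, f (k ⊗ₜ[R] (⨂ₜ[R] i, α (v i))) =
      (G 2).mkQ (⨂ₜ[R] j, FiltTP.ins i0 (β k) v j) := hf
  let σX : Module.End R ((⨂[R] (_ : Fin p), E) ⧸ G 2) := (G 2).mapQ (G 2) σE (hσG 2)
  have hσX : ∀ (n : ℕ) x, (σX ^ n) ((G 2).mkQ x) = (G 2).mkQ (((σE : Module.End R _) ^ n) x) := by
    intro n
    induction n with
    | zero => intro x; rfl
    | succ n ih => intro x; rw [pow_succ', pow_succ', Module.End.mul_apply, ih]; rfl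
  have hσXp : σX ^ p = 1 := by
    ext x
    change (σX ^ p) ((G 2).mkQ _) = (G 2).mkQ _
    rw [hσX, hσp]; rfl
  obtain ⟨Φ, hΦ1, hΦσ, hΦinj, hΦrange⟩ := FiltTP.induced p σX hσXp f
  let π := (G 2).liftQ (FiltTP.proj i0 α) (by
    refine Submodule.span_le.2 ?_
    rintro _ ⟨v, s, hs, hv, rfl⟩
    obtain ⟨a, ha, hne⟩ := Finset.exists_mem_ne (by omega : 1 < s.card) i0
    exact FiltTP.proj_eq_zero i0 α v a hne ((hαβ _).1 (hv a ha)))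
  have hπ : ∀ x, π ((G 2).mkQ x) = FiltTP.proj i0 α x := fun x => rfl
  have hΦi : Function.Injective Φ := by
    refine hΦinj _ π ?_ ?_
    · intro n hn t
      change t ∈ LinearMap.ker (π ∘ₗ (σX ^ n) ∘ₗ f)
      refine FiltTP.T_ind α hα _ (fun k v => ?_) t
      rw [LinearMap.mem_ker, LinearMap.comp_apply, LinearMap.comp_apply, hf, hσX, hπ, hσpow]
      refine FiltTP.proj_eq_zero i0 α _ ((finRotate p ^ n) i0) ?_ ?_
      · intro h
        apply hn
        have := hrot n
        rw [h] at this
        exact Nat.dvd_of_mod_eq_zero this.symm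
      · simp [FiltTP.ins, hαβ']
    · have hfl := FiltTP.flat_pi hQflat {i : Fin p // i ≠ i0}
      have : π ∘ₗ f = β.rTensor (⨂[R] (_ : {i : Fin p // i ≠ i0}), Q) := by
        rw [← LinearMap.eqLocus_eq_top, eq_top_iff]
        intro t _
        refine FiltTP.T_ind α hα _ (fun k v => ?_) t
        rw [LinearMap.mem_eqLocus, LinearMap.comp_apply, hf, hπ, FiltTP.proj_tprod,
          LinearMap.rTensor_tmul]
        have h1 : FiltTP.ins i0 (β k) v i0 = β k := by simp [FiltTP.ins]
        have h2 : (fun i : {i : Fin p // i ≠ i0} => α (FiltTP.ins i0 (β k) v i.1)) =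
            fun i => α (v i) := by
          ext i
          simp [FiltTP.ins, i.2]
        rw [h1, h2]
      rw [this]
      exact Module.Flat.rTensor_preserves_injective_linearMap β hβ
  let jj : (G 1 ⧸ G21) →ₗ[R] ((⨂[R] (_ : Fin p), E) ⧸ G 2) := G21.mapQ (G 2) (G 1).subtype le_rfl
  have hjj : ∀ y : G 1, jj (Submodule.Quotient.mk y) = (G 2).mkQ y.1 := fun y => rfl
  have hji : Function.Injective jj := by
    rw [injective_iff_map_eq_zero]
    intro x hx
    obtain ⟨y, rfl⟩ := Submodule.Quotient.mk_surjective _ x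
    rw [hjj, Submodule.mkQ_apply, Submodule.Quotient.mk_eq_zero] at hx
    rw [Submodule.Quotient.mk_eq_zero]
    exact hx
  have hrange : LinearMap.range Φ = LinearMap.range jj := by
    apply le_antisymm
    · apply hΦrange
      intro t n
      change t ∈ (LinearMap.range jj).comap ((σX ^ n) ∘ₗ f)
      refine FiltTP.T_ind α hα _ (fun k v => ?_) t
      rw [Submodule.mem_comap, LinearMap.comp_apply, hf, hσX, hσpow]
      refine ⟨Submodule.Quotient.mk ⟨_, ?_⟩, hjj _⟩
      refine hGmem 1 _ {(finRotate p ^ n) i0} (by simp) ?_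
      intro i hi
      rw [Finset.mem_singleton] at hi
      subst hi
      simp [FiltTP.ins]
    · have hst : ∀ (n : ℕ) x, x ∈ LinearMap.range Φ → (σX ^ n) x ∈ LinearMap.range Φ := by
        intro n
        induction n with
        | zero => intro x hx; exact hx
        | succ n ih =>
          intro x hx
          obtain ⟨z, hz⟩ := ih x hx
          rw [pow_succ', Module.End.mul_apply, ← hz, ← hΦσ]
          exact ⟨_, rfl⟩
      have hle : G 1 ≤ (LinearMap.range Φ).comap (G 2).mkQ := by
        refine Submodule.span_le.2 ?_
        rintro _ ⟨v, s, hs, hv, rfl⟩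
        obtain ⟨a, rfl⟩ := Finset.card_eq_one.1 hs
        obtain ⟨k, hk⟩ := hv a (by simp)
        change (G 2).mkQ _ ∈ LinearMap.range Φ
        have ha : (finRotate p ^ a.val) i0 = a := by
          ext
          rw [hrot, Nat.mod_eq_of_lt a.2]
        have h1 : (⨂ₜ[R] i, v i) = ((σE : Module.End R _) ^ a.val)
            (⨂ₜ[R] i, FiltTP.ins i0 (β k)
              (fun i => v ((finRotate p ^ a.val) i.1)) i) := by
          rw [hσpow]
          congr 1
          ext i
          obtain ⟨i', rfl⟩ := (finRotate p ^ a.val).surjective i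
          rw [Equiv.symm_apply_apply]
          by_cases hi : i' = i0
          · subst hi; simp [FiltTP.ins, ha, hk]
          · simp [FiltTP.ins, hi]
        rw [h1, ← hσX, ← hf, ← hΦ1]
        exact hst _ _ ⟨_, rfl⟩
      rintro _ ⟨x, rfl⟩
      obtain ⟨y, rfl⟩ := Submodule.Quotient.mk_surjective _ x
      rw [hjj]
      exact hle y.2
  let e : L ≃ₗ[R] (G 1 ⧸ G21) := (LinearEquiv.ofInjective Φ hΦi).trans
    ((LinearEquiv.ofEq _ _ hrange).trans (LinearEquiv.ofInjective jj hji).symm)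
  have he : ∀ z, jj (e z) = Φ z := by
    intro z
    have := LinearEquiv.apply_symm_apply (LinearEquiv.ofInjective jj hji)
      ((LinearEquiv.ofEq _ _ hrange) (LinearEquiv.ofInjective Φ hΦi z))
    exact congrArg Subtype.val this
  refine ⟨e, ?_, ?_⟩
  · intro k v h1
    apply hji
    rw [he, hjj]
    exact (hΦ1 _).trans (hf k v)
  · intro z y hy hy' h
    apply hji
    have h2 : Φ z = (G 2).mkQ y := by rw [← he, h, hjj]
    rw [he, hjj]
    refine (hΦσ z).trans ?_
    rw [h2]; rfl
end
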